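/- Let L ⊂ ℝ^n be a full-rank lattice and define the theta function Θ_L(x) = Σ_{l∈L} exp(−π Σ_{k=1}^n x_k l_k²) for x ∈ (ℝ₊)^n. Then Θ_L satisfies the functional equation Θ_L(x) = (vol(ℝ^n/L))⁻¹ · (x₁⋯xₙ)^{−1/2} · Θ_{L*}(1/x), where 1/x is the coordinate-wise reciprocal and L* is the dual lattice. -/

import Mathlib

open Real MeasureTheory UnitAddTorus

/-- The integral over `ℝᵈ` is the sum of the integrals over the integer translates of the unit
cube. -/
lemma hasSum_integral_unitCube {d E : Type*} [Fintype d] [NormedAddCommGroup E] [NormedSpace ℝ E]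
    {f : (d → ℝ) → E} (hf : Integrable f) :
    HasSum (fun m : d → ℤ => ∫ y in {y : d → ℝ | ∀ i, y i ∈ Set.Ioc (0 : ℝ) (0 + 1)},
      f (y + fun i => (m i : ℝ))) (∫ y, f y) := by
  set C : Set (d → ℝ) := {y : d → ℝ | ∀ i, y i ∈ Set.Ioc (0 : ℝ) (0 + 1)}
  let s : (d → ℤ) → Set (d → ℝ) := fun m => {y | ∀ i, y i - m i ∈ Set.Ioc (0 : ℝ) (0 + 1)}
  have hCm : MeasurableSet C := by
    exact MeasurableSet.univ_pi' fun i => measurableSet_Ioc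
  have hs : ∀ m, s m = (fun y => y + fun i => (m i : ℝ)) '' C := by
    intro m
    ext y
    constructor
    · intro hy
      exact ⟨y - fun i => (m i : ℝ), hy, by simp⟩
    · rintro ⟨z, hz, rfl⟩ i
      simpa using hz i
  have hemb : ∀ m : d → ℤ, MeasurableEmbedding (fun y : d → ℝ => y + fun i => (m i : ℝ)) :=
    fun m => measurableEmbedding_addRight _
  have hceil : ∀ m : d → ℤ, ∀ y ∈ s m, m = fun i => ⌈y i⌉ - 1 := by
    intro m y hy
    ext i
    have h := hy i
    have : ⌈y i⌉ = m i + 1 := by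
      rw [Int.ceil_eq_iff]
      push_cast
      constructor <;> linarith [h.1, h.2]
    omega
  have hU : ⋃ m, s m = Set.univ := by
    refine Set.eq_univ_of_forall fun y => Set.mem_iUnion.2 ⟨fun i => ⌈y i⌉ - 1, fun i => ?_⟩
    push_cast
    constructor <;> linarith [Int.le_ceil (y i), Int.ceil_lt_add_one (y i)]
  have key := hasSum_integral_iUnion (μ := volume) (f := f) (s := s)
    (fun m => hs m ▸ (hemb m).measurableSet_image.2 hCm)
    (fun m m' hmm' => Set.disjoint_left.2 fun y hy hy' =>
      hmm' ((hceil m y hy).trans (hceil m' y hy').symm)) hf.integrableOn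
  rw [hU, setIntegral_univ] at key
  refine key.congr_fun fun m => ?_
  rw [hs m]
  exact ((measurePreserving_add_right volume _).setIntegral_image_emb (hemb m) f C).symm

lemma mFourier_coe_add_intCast {d : Type*} [Fintype d] (k m : d → ℤ) (y : d → ℝ) :
    mFourier k (fun i => (((y + fun i => (m i : ℝ)) i : ℝ) : UnitAddCircle)) =
      mFourier k (fun i => (y i : UnitAddCircle)) := by
  congr 1
  ext i
  simp

/-- **Poisson summation formula** on `ℝᵈ`, for an integrable function whose periodization is
continuous and whose Fourier transform is summable over `ℤᵈ`. -/
theorem tsum_intCast_eq_tsum_integral_mFourier {d : Type*} [Fintype d] {f : (d → ℝ) → ℂ}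
    (hint : Integrable f)
    (hcont : Continuous fun y : d → ℝ => ∑' m : d → ℤ, f (y + fun i => (m i : ℝ)))
    (hsum : Summable fun k : d → ℤ =>
      ∫ y : d → ℝ, mFourier (-k) (fun i => (y i : UnitAddCircle)) * f y) :
    ∑' m : d → ℤ, f (fun i => (m i : ℝ)) =
      ∑' k : d → ℤ, ∫ y : d → ℝ, mFourier (-k) (fun i => (y i : UnitAddCircle)) * f y := by
  set P : (d → ℝ) → ℂ := fun y => ∑' m : d → ℤ, f (y + fun i => (m i : ℝ)) with hP
  have hper : ∀ (y : d → ℝ) (l : d → ℤ), P (y + fun i => (l i : ℝ)) = P y := by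
    intro y l
    rw [hP]
    refine Eq.trans (tsum_congr fun m => ?_)
      ((Equiv.addLeft l).tsum_eq fun m : d → ℤ => f (y + fun i => (m i : ℝ)))
    congr 1
    ext i
    simp [add_assoc]
  let q : (d → ℝ) → UnitAddTorus d := Pi.map fun _ (r : ℝ) => (r : UnitAddCircle)
  have hq : IsOpenQuotientMap q :=
    IsOpenQuotientMap.piMap fun _ => QuotientAddGroup.isOpenQuotientMap_mk
  let F : UnitAddTorus d → ℂ := fun t => P (Function.surjInv hq.surjective t)
  have hFq : ∀ y, F (q y) = P y := by
    intro y
    have h : ∀ i, ∃ l : ℤ, y i + l = Function.surjInv hq.surjective (q y) i := by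
      intro i
      have h1 := congrFun (Function.surjInv_eq hq.surjective (q y)) i
      have h2 : ((Function.surjInv hq.surjective (q y) i - y i : ℝ) : UnitAddCircle) = 0 := by
        rw [AddCircle.coe_sub, sub_eq_zero]
        exact h1
      rw [AddCircle.coe_eq_zero_iff] at h2
      obtain ⟨l, hl⟩ := h2
      exact ⟨l, by simp at hl; linarith⟩
    choose l hl using h
    change P _ = P y
    rw [← hper y l]
    congr 1
    ext i
    exact (hl i).symm
  have hF : Continuous F := by
    rw [← hq.continuous_comp_iff]
    exact hcont.congr fun y => (hFq y).symm
  have hcoeff : ∀ k, mFourierCoeff F k =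
      ∫ y : d → ℝ, mFourier (-k) (fun i => (y i : UnitAddCircle)) * f y := by
    intro k
    set g : (d → ℝ) → ℂ := fun y => mFourier (-k) (fun i => (y i : UnitAddCircle)) * f y with hg
    have hgint : Integrable g := by
      refine hint.bdd_mul (c := 1) ?_ (Filter.Eventually.of_forall fun y =>
        ((mFourier (-k)).norm_coe_le_norm _).trans_eq mFourier_norm)
      exact ((mFourier (-k)).continuous.comp hq.continuous).aestronglyMeasurable
    rw [mFourierCoeff_eq_integral F k 0, ← (hasSum_integral_unitCube hgint).tsum_eq]
    refine Eq.trans ?_ (hasSum_integral_of_summable_integral_norm (fun m => ?_)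
      (hasSum_integral_unitCube hgint.norm).summable).tsum_eq.symm
    · refine setIntegral_congr_fun ?_ fun y _ => ?_
      · exact MeasurableSet.univ_pi' fun i => measurableSet_Ioc
      · change _ * F (q y) = _
        simp only [hFq, hP, hg, mFourier_coe_add_intCast, tsum_mul_left]
    · exact (hgint.comp_add_right _).integrableOn
  have hs : Summable (mFourierCoeff (⟨F, hF⟩ : C(UnitAddTorus d, ℂ))) :=
    hsum.congr fun k => (hcoeff k).symm
  have h0 := (hasSum_mFourier_series_apply_of_summable hs (q 0)).tsum_eq
  have h1 : ∀ k : d → ℤ, mFourier k (q 0) = 1 := by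
    intro k
    simp [mFourier, q]
  simp only [ContinuousMap.coe_mk, hFq, h1, hcoeff, smul_eq_mul, mul_one] at h0
  rw [h0]
  simp [hP]

lemma summable_exp_neg_mul_sq_int {c : ℝ} (hc : 0 < c) :
    Summable fun m : ℤ => rexp (-c * (m : ℝ) ^ 2) := by
  have h : Summable fun m : ℕ => rexp (-c * (m : ℝ) ^ 2) :=
    summable_exp_nat_mul_of_ge (neg_lt_zero.2 hc) fun i => by
      exact_mod_cast Nat.le_self_pow two_ne_zero i
  exact Summable.of_nat_of_neg (by simpa using h) (by simpa using h)

lemma summable_exp_neg_mul_sum_sq {c : ℝ} (hc : 0 < c) (n : ℕ) :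
    Summable fun m : Fin n → ℤ => rexp (-c * ∑ i, (m i : ℝ) ^ 2) := by
  induction n with
  | zero => exact Summable.of_finite
  | succ n ih =>
    rw [← (Fin.consEquiv fun _ => ℤ).summable_iff]
    refine ((summable_exp_neg_mul_sq_int hc).mul_of_nonneg ih (fun _ => (exp_pos _).le)
      fun _ => (exp_pos _).le).congr fun m => ?_
    simp [Fin.consEquiv, Fin.sum_univ_succ, mul_add, Real.exp_add]

lemma measurableEmbedding_mulVec {ι : Type*} [Fintype ι] [DecidableEq ι] {A : Matrix ι ι ℝ}
    (hA : IsUnit A.det) : MeasurableEmbedding fun y : ι → ℝ => A.mulVec y :=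
  Continuous.measurableEmbedding (by fun_prop)
    (Matrix.mulVec_injective_iff_isUnit.2 ((Matrix.isUnit_iff_isUnit_det A).2 hA))

lemma map_mulVec_volume {ι : Type*} [Fintype ι] [DecidableEq ι] {A : Matrix ι ι ℝ}
    (hA : IsUnit A.det) : Measure.map (fun y : ι → ℝ => A.mulVec y) volume =
      ENNReal.ofReal |A.det⁻¹| • volume :=
  Real.map_matrix_volume_pi_eq_smul_volume_pi hA.ne_zero

lemma integral_comp_mulVec {ι E : Type*} [Fintype ι] [DecidableEq ι] [NormedAddCommGroup E]
    [NormedSpace ℝ E] {A : Matrix ι ι ℝ} (hA : IsUnit A.det) (f : (ι → ℝ) → E) :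
    ∫ y, f (A.mulVec y) = |A.det|⁻¹ • ∫ z, f z := by
  rw [← (measurableEmbedding_mulVec hA).integral_map, map_mulVec_volume hA, integral_smul_measure,
    ENNReal.toReal_ofReal (abs_nonneg _), abs_inv]

lemma integrable_comp_mulVec {ι E : Type*} [Fintype ι] [DecidableEq ι] [NormedAddCommGroup E]
    {A : Matrix ι ι ℝ} (hA : IsUnit A.det) {f : (ι → ℝ) → E} (hf : Integrable f) :
    Integrable fun y => f (A.mulVec y) := by
  refine ((measurableEmbedding_mulVec hA).integrable_map_iff (g := f)).1 ?_
  rw [map_mulVec_volume hA]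
  exact hf.smul_measure ENNReal.ofReal_ne_top

/-- The quadratic form `∑ xₖ (A y)ₖ²` is coercive when `A` is invertible and all `xₖ > 0`. -/
lemma exists_pos_mul_sum_sq_le {ι : Type*} [Fintype ι] [DecidableEq ι] {A : Matrix ι ι ℝ}
    (hA : IsUnit A.det) {x : ι → ℝ} (hx : ∀ k, 0 < x k) :
    ∃ c > 0, ∀ y : ι → ℝ, c * ∑ i, y i ^ 2 ≤ ∑ k, x k * (A.mulVec y k) ^ 2 := by
  set K : ℝ := ∑ i, ∑ k, (A⁻¹ i k) ^ 2 * (x k)⁻¹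
  have hK : 0 ≤ K := Finset.sum_nonneg fun i _ => Finset.sum_nonneg fun k _ =>
    mul_nonneg (sq_nonneg _) (inv_nonneg.2 (hx k).le)
  refine ⟨(K + 1)⁻¹, by positivity, fun y => ?_⟩
  set z := A.mulVec y with hz
  have hQ : 0 ≤ ∑ k, x k * z k ^ 2 :=
    Finset.sum_nonneg fun k _ => mul_nonneg (hx k).le (sq_nonneg _)
  have hy : y = A⁻¹.mulVec z := by
    rw [hz, Matrix.mulVec_mulVec, Matrix.nonsing_inv_mul A hA, Matrix.one_mulVec]
  have hbound : ∑ i, y i ^ 2 ≤ K * ∑ k, x k * z k ^ 2 := by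
    rw [Finset.sum_mul]
    refine Finset.sum_le_sum fun i _ => ?_
    rw [hy]
    refine Finset.sum_sq_le_sum_mul_sum_of_sq_le_mul _
      (fun k _ => mul_nonneg (sq_nonneg _) (inv_nonneg.2 (hx k).le))
      (fun k _ => mul_nonneg (hx k).le (sq_nonneg _)) fun k _ => le_of_eq ?_
    have := (hx k).ne'
    field_simp
  rw [inv_mul_le_iff₀ (by positivity)]
  linarith

lemma summable_exp_neg_quadratic {n : ℕ} {A : Matrix (Fin n) (Fin n) ℝ} (hA : IsUnit A.det)
    {x : Fin n → ℝ} (hx : ∀ k, 0 < x k) :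
    Summable fun m : Fin n → ℤ =>
      rexp (-π * ∑ k, x k * (A.mulVec (fun i => (m i : ℝ)) k) ^ 2) := by
  obtain ⟨c, hc, hcQ⟩ := exists_pos_mul_sum_sq_le hA hx
  refine (summable_exp_neg_mul_sum_sq (mul_pos pi_pos hc) n).of_nonneg_of_le
    (fun _ => (exp_pos _).le) fun m => exp_le_exp.2 ?_
  have := mul_le_mul_of_nonneg_left (hcQ fun i => (m i : ℝ)) pi_pos.le
  linarith

lemma continuous_tsum_exp_neg_quadratic {n : ℕ} {A : Matrix (Fin n) (Fin n) ℝ}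
    (hA : IsUnit A.det) {x : Fin n → ℝ} (hx : ∀ k, 0 < x k) :
    Continuous fun y : Fin n → ℝ => ∑' m : Fin n → ℤ,
      rexp (-π * ∑ k, x k * (A.mulVec (y + fun i => (m i : ℝ)) k) ^ 2) := by
  obtain ⟨c, hc, hcQ⟩ := exists_pos_mul_sum_sq_le hA hx
  refine continuous_iff_continuousAt.2 fun y₀ => ?_
  set R : ℝ := ∑ i, y₀ i ^ 2 + 1
  have hopen : IsOpen {y : Fin n → ℝ | ∑ i, y i ^ 2 < R} :=
    isOpen_lt (by fun_prop) continuous_const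
  refine ContinuousOn.continuousAt (s := {y : Fin n → ℝ | ∑ i, y i ^ 2 < R}) ?_
    (hopen.mem_nhds (lt_add_one (∑ i, y₀ i ^ 2)))
  refine continuousOn_tsum (fun m => Continuous.continuousOn ?_)
    ((summable_exp_neg_mul_sum_sq (mul_pos pi_pos (half_pos hc)) n).mul_left (rexp (π * c * R)))
    fun m y hy => ?_
  · refine Real.continuous_exp.comp (continuous_const.mul (continuous_finsetSum _ fun k _ => ?_))
    refine continuous_const.mul (Continuous.pow ?_ 2)
    exact (continuous_apply k).comp (by fun_prop : Continuous fun y : Fin n → ℝ =>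
      A.mulVec (y + fun i => (m i : ℝ)))
  · rw [Real.norm_of_nonneg (exp_pos _).le, ← Real.exp_add, exp_le_exp]
    have h1 : (∑ i, (m i : ℝ) ^ 2) / 2 - ∑ i, y i ^ 2 ≤ ∑ i, (y i + m i) ^ 2 := by
      rw [Finset.sum_div, ← Finset.sum_sub_distrib]
      exact Finset.sum_le_sum fun i _ => by nlinarith [sq_nonneg (2 * y i + m i)]
    have h2 := hcQ (y + fun i => (m i : ℝ))
    simp only [Pi.add_apply] at h2
    have h3 : c * ((∑ i, (m i : ℝ) ^ 2) / 2 - R) ≤ c * ∑ i, (y i + m i) ^ 2 :=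
      mul_le_mul_of_nonneg_left (by linarith [Set.mem_ofPred_eq ▸ hy]) hc.le
    have h4 := mul_le_mul_of_nonneg_left (h3.trans h2) pi_pos.le
    linarith

/-- The character `y ↦ exp (-2πi k·y)` in the coordinates `A y`. -/
lemma mFourier_neg_coe_eq_cexp {n : ℕ} {A : Matrix (Fin n) (Fin n) ℝ} (hA : IsUnit A.det)
    (k : Fin n → ℤ) (y : Fin n → ℝ) :
    mFourier (-k) (fun i => (y i : UnitAddCircle)) = Complex.exp (∑ j,
      (-2 * π * Complex.I * (A⁻¹.transpose.mulVec (fun i => (k i : ℝ)) j : ℝ)) *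
        (A.mulVec y j : ℝ)) := by
  have hdot : ∑ j, A⁻¹.transpose.mulVec (fun i => (k i : ℝ)) j * A.mulVec y j =
      ∑ i, (k i : ℝ) * y i := by
    change Matrix.mulVec _ _ ⬝ᵥ Matrix.mulVec _ _ = _ ⬝ᵥ _
    rw [Matrix.mulVec_transpose, ← Matrix.dotProduct_mulVec, Matrix.mulVec_mulVec,
      Matrix.nonsing_inv_mul A hA, Matrix.one_mulVec]
  simp only [mFourier, ContinuousMap.coe_mk, fourier_coe_apply, ← Complex.exp_sum]
  congr 1
  calc _ = -2 * π * Complex.I * ((∑ i, (k i : ℝ) * y i : ℝ) : ℂ) := by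
        push_cast
        rw [Finset.mul_sum]
        exact Finset.sum_congr rfl fun i _ => by simp; ring
    _ = _ := by
        rw [← hdot]
        push_cast
        rw [Finset.mul_sum]
        exact Finset.sum_congr rfl fun i _ => by ring

lemma integral_mFourier_mul_exp_neg_quadratic {n : ℕ} {A : Matrix (Fin n) (Fin n) ℝ}
    (hA : IsUnit A.det) {x : Fin n → ℝ} (hx : ∀ k, 0 < x k) (k : Fin n → ℤ) :
    ∫ y : Fin n → ℝ, mFourier (-k) (fun i => (y i : UnitAddCircle)) *
        (rexp (-π * ∑ j, x j * (A.mulVec y j) ^ 2) : ℂ) =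
      ((|A.det|⁻¹ * (∏ j, x j) ^ (-(1 : ℝ) / 2) * rexp (-π * ∑ j, (x j)⁻¹ *
        (A⁻¹.transpose.mulVec (fun i => (k i : ℝ)) j) ^ 2) : ℝ) : ℂ) := by
  set w := A⁻¹.transpose.mulVec (fun i => (k i : ℝ))
  have hb : ∀ j, 0 < (((π * x j : ℝ) : ℂ)).re := fun j => by
    rw [Complex.ofReal_re]
    exact mul_pos pi_pos (hx j)
  let gauss : (Fin n → ℝ) → ℂ := fun v =>
    Complex.exp (-∑ j, ((π * x j : ℝ) : ℂ) * (v j : ℂ) ^ 2 +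
      ∑ j, (-2 * π * Complex.I * (w j : ℝ)) * v j)
  have hgauss : ∀ y : Fin n → ℝ, mFourier (-k) (fun i => (y i : UnitAddCircle)) *
        (rexp (-π * ∑ j, x j * (A.mulVec y j) ^ 2) : ℂ) =
      gauss (A.mulVec y) := by
    intro y
    rw [mFourier_neg_coe_eq_cexp hA, Complex.ofReal_exp, ← Complex.exp_add, add_comm]
    congr 2
    push_cast
    rw [Finset.mul_sum, ← Finset.sum_neg_distrib]
    exact Finset.sum_congr rfl fun i _ => by ring
  rw [integral_congr_ae (.of_forall hgauss), integral_comp_mulVec hA gauss,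
    GaussianFourier.integral_cexp_neg_sum_mul_add hb,
    Complex.real_smul, mul_assoc |A.det|⁻¹, Complex.ofReal_mul]
  congr 1
  rw [← Real.finsetProd_rpow _ _ fun j _ => (hx j).le, Finset.mul_sum, Real.exp_sum,
    ← Finset.prod_mul_distrib, Complex.ofReal_prod]
  refine Finset.prod_congr rfl fun j _ => ?_
  have hxj := (hx j).ne'
  rw [Complex.ofReal_mul (x j ^ _), Complex.ofReal_exp]
  congr 1
  · have h : (π : ℂ) / ((π * x j : ℝ) : ℂ) = (((x j)⁻¹ : ℝ) : ℂ) := by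
      rw [← Complex.ofReal_div]
      congr 1
      field_simp
    rw [h, neg_div, Real.rpow_neg (hx j).le, ← Real.inv_rpow (hx j).le,
      Complex.ofReal_cpow (inv_nonneg.2 (hx j).le)]
    norm_num
  · congr 1
    have hxc : (x j : ℂ) ≠ 0 := by exact_mod_cast hxj
    have hpi : (π : ℂ) ≠ 0 := by exact_mod_cast pi_ne_zero
    push_cast
    field_simp
    rw [Complex.I_sq]
    ring

lemma integrable_exp_neg_quadratic {n : ℕ} {A : Matrix (Fin n) (Fin n) ℝ}
    (hA : IsUnit A.det) {x : Fin n → ℝ} (hx : ∀ k, 0 < x k) :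
    Integrable fun y : Fin n → ℝ => (rexp (-π * ∑ j, x j * (A.mulVec y j) ^ 2) : ℂ) := by
  have hb : ∀ j, 0 < (((π * x j : ℝ) : ℂ)).re := fun j => by
    rw [Complex.ofReal_re]
    exact mul_pos pi_pos (hx j)
  refine (integrable_comp_mulVec hA
    (GaussianFourier.integrable_cexp_neg_sum_mul_add hb 0)).congr (.of_forall fun y => ?_)
  simp [Finset.mul_sum, mul_assoc]

/-- The theta function of a full-rank lattice `L = A(ℤⁿ)` satisfies
`Θ_L(x) = vol(ℝⁿ/L)⁻¹ (x₁⋯xₙ)^{−1/2} Θ_{L*}(1/x)`. -/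
theorem theta_functional_equation (n : ℕ) (A : Matrix (Fin n) (Fin n) ℝ) (hA : IsUnit A.det)
    (x : Fin n → ℝ) (hx : ∀ k, 0 < x k) :
    (∑' m : Fin n → ℤ,
        Real.exp (-π * ∑ k, x k * (A.mulVec (fun i => (m i : ℝ)) k) ^ 2)) =
      |A.det|⁻¹ * (∏ k, x k) ^ (-(1 : ℝ) / 2) *
        ∑' m : Fin n → ℤ,
          Real.exp (-π * ∑ k, (x k)⁻¹ *
            ((A⁻¹).transpose.mulVec (fun i => (m i : ℝ)) k) ^ 2) := by
  have hB : IsUnit (A⁻¹).transpose.det := by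
    rw [Matrix.det_transpose]
    exact Matrix.isUnit_nonsing_inv_det A hA
  have hsum := (summable_exp_neg_quadratic hB fun k => inv_pos.2 (hx k)).mul_left
    (|A.det|⁻¹ * (∏ k, x k) ^ (-(1 : ℝ) / 2))
  have h := tsum_intCast_eq_tsum_integral_mFourier (integrable_exp_neg_quadratic hA hx)
    (by
      simp_rw [← Complex.ofReal_tsum]
      exact Complex.continuous_ofReal.comp (continuous_tsum_exp_neg_quadratic hA hx))
    (by
      simp_rw [integral_mFourier_mul_exp_neg_quadratic hA hx]
      exact Complex.ofRealCLM.summable hsum)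
  simp_rw [integral_mFourier_mul_exp_neg_quadratic hA hx, ← Complex.ofReal_tsum] at h
  rw [← tsum_mul_left]
  exact_mod_cast h
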